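/- Let 2 ≤ p ≤ n be integers, r > 0, and let u : Δⁿ_p(r) → [0,∞] be convex. Then ∫_{Δⁿ_p(r/2)} u^{p/(p−1)} dλⁿ ≤ (p−1) · (2/r)^{(n−p)/(p−1)} · ∑_{i=1}^p ( ∫_{∂_iΔⁿ_p(r)} u dx' )^{p/(p−1)}. -/

import Mathlib

open MeasureTheory
open scoped ENNReal

/-- A `[0,∞]`-valued function on a set `K ⊆ ℝⁿ` is convex if
`u((1−t)x+ty) ≤ (1−t)u(x)+t·u(y)` in `[0,∞]` for all `x, y ∈ K` and `t ∈ [0,1]`. -/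
def ConvexFnOn {n : ℕ} (K : Set (Fin n → ℝ)) (u : (Fin n → ℝ) → ℝ≥0∞) : Prop :=
  ∀ ⦃x⦄, x ∈ K → ∀ ⦃y⦄, y ∈ K → ∀ ⦃t : ℝ⦄, 0 ≤ t → t ≤ 1 →
    u ((1 - t) • x + t • y) ≤ ENNReal.ofReal (1 - t) * u x + ENNReal.ofReal t * u y

/-- `Δⁿ_p(r) = { x ∈ [0,∞)^p × (−r,r)^{n−p} : x₁+⋯+x_p < r }`. -/
def stdSlab (n p : ℕ) (r : ℝ) : Set (Fin n → ℝ) :=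
  {x | (∀ i : Fin n, (i : ℕ) < p → 0 ≤ x i) ∧
       (∀ i : Fin n, p ≤ (i : ℕ) → x i ∈ Set.Ioo (-r) r) ∧
       ∑ i ∈ Finset.univ.filter (fun i : Fin n => (i : ℕ) < p), x i < r}

/-- The `(n−1)`-dimensional Lebesgue measure on the hyperplane `{xᵢ = 0} ⊆ ℝⁿ`,
realized as the product of Lebesgue measures in the coordinates `j ≠ i` with the
Dirac mass at `0` in the coordinate `i`. -/
noncomputable def hyperplaneMeasure (n : ℕ) (i : Fin n) : Measure (Fin n → ℝ) :=
  Measure.pi (fun j => if j = i then Measure.dirac 0 else volume)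

/-- `∂ᵢΔⁿ_p(r) = { x ∈ Δⁿ_p(r) : xᵢ = 0 }`. -/
def slabFace (n p : ℕ) (r : ℝ) (i : Fin n) : Set (Fin n → ℝ) :=
  {x ∈ stdSlab n p r | x i = 0}

/-- `∫_{∂ᵢΔⁿ_p(r)} u dx'`, the integral of `u` over the boundary face `∂ᵢΔⁿ_p(r)`
with respect to the `(n−1)`-dimensional Lebesgue measure of the hyperplane `{xᵢ=0}`. -/
noncomputable def faceIntegral (n p : ℕ) (r : ℝ) (i : Fin n)
    (u : (Fin n → ℝ) → ℝ≥0∞) : ℝ≥0∞ :=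
  ∫⁻ x in slabFace n p r i, u x ∂(hyperplaneMeasure n i)


open Function

lemma lw_ineq {n : ℕ} (S : Finset (Fin n)) (e : ℝ) (he : 0 ≤ e) (hS : ((S.card : ℝ) - 1) * e = 1)
    (G : Fin n → (Fin n → ℝ) → ℝ≥0∞) (hG : ∀ i, Measurable (G i))
    (hinv : ∀ i ∈ S, ∀ x t, G i (update x i t) = G i x) (s : Finset (Fin n)) (hs : s ⊆ S) :
    ∀ x, (∫⋯∫⁻_s, fun x => ∏ i ∈ S, G i x ^ e) x
      ≤ ∏ i ∈ S, ((∫⋯∫⁻_(s.erase i), G i) x) ^ e := by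
  induction s using Finset.induction with
  | empty => intro x; simp
  | insert j s hj ih =>
    intro x
    have hjS : j ∈ S := hs (Finset.mem_insert_self _ _)
    have hsS : s ⊆ S := (Finset.subset_insert _ _).trans hs
    have hmeas : Measurable (fun x => ∏ i ∈ S, G i x ^ e) :=
      Finset.measurable_prod _ fun i _ => (hG i).pow_const e
    rw [lmarginal_insert _ hmeas hj]
    have hm : ∀ i, Measurable fun t : ℝ => (∫⋯∫⁻_(s.erase i), G i) (update x j t) := fun i =>
      (Measurable.lmarginal (fun _ => volume) (hG i)).comp (measurable_update x)
    calc _ ≤ ∫⁻ t, ∏ i ∈ S, ((∫⋯∫⁻_(s.erase i), G i) (update x j t)) ^ e :=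
          lintegral_mono fun t => ih hsS _
      _ = ∫⁻ t, ((∫⋯∫⁻_s, G j) x) ^ e *
            ∏ i ∈ S.erase j, ((∫⋯∫⁻_(s.erase i), G i) (update x j t)) ^ e := by
          congr 1; ext t
          rw [← Finset.mul_prod_erase _ _ hjS, Finset.erase_eq_of_notMem hj,
            lmarginal_update_of_notMem (hG j) hj]
          have : G j ∘ (fun y => update y j t) = G j := funext fun y => hinv j hjS y t
          rw [this]
      _ = ((∫⋯∫⁻_s, G j) x) ^ e *
            ∫⁻ t, ∏ i ∈ S.erase j, ((∫⋯∫⁻_(s.erase i), G i) (update x j t)) ^ e := by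
          rw [lintegral_const_mul]
          exact Finset.measurable_prod _ fun i _ => (hm i).pow_const e
      _ ≤ ((∫⋯∫⁻_s, G j) x) ^ e *
            ∏ i ∈ S.erase j, (∫⁻ t, (∫⋯∫⁻_(s.erase i), G i) (update x j t)) ^ e := by
          gcongr
          apply ENNReal.lintegral_prod_norm_pow_le
          · exact fun i _ => (hm i).aemeasurable
          · rw [Finset.sum_const, Finset.card_erase_of_mem hjS, nsmul_eq_mul, Nat.cast_sub
              (Finset.card_pos.2 ⟨j, hjS⟩)]
            simpa using hS
          · exact fun _ _ => he
      _ = _ := by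
          rw [← Finset.mul_prod_erase S _ hjS, Finset.erase_insert hj]
          congr 1
          refine Finset.prod_congr rfl fun i hi => ?_
          have hij : i ≠ j := (Finset.mem_erase.1 hi).1
          rw [Finset.erase_insert_of_ne hij.symm, lmarginal_insert _ (hG i)]
          simp [hj]

lemma convex_aemeas {m : ℕ} (K : Set (Fin m → ℝ)) (w : (Fin m → ℝ) → ℝ≥0∞)
    (hK : Convex ℝ K) (h : ∀ c, Convex ℝ {x ∈ K | w x ≤ c}) :
    AEMeasurable (K.indicator w) := by
  apply NullMeasurable.aemeasurable
  apply measurable_of_Ioi (α := ℝ≥0∞) (δ := NullMeasurableSpace (Fin m → ℝ) volume)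
  intro c
  have : K.indicator w ⁻¹' Set.Ioi c = K \ {x ∈ K | w x ≤ c} := by
    ext x
    by_cases hx : x ∈ K <;> simp [hx]
  show NullMeasurableSet (K.indicator w ⁻¹' Set.Ioi c) volume
  rw [this]
  exact (hK.nullMeasurableSet volume).diff ((h c).nullMeasurableSet volume)

lemma convexFn_sub {n : ℕ} {K : Set (Fin n → ℝ)} {u} (hK : Convex ℝ K) (hu : ConvexFnOn K u) (c : ℝ≥0∞) :
    Convex ℝ {x ∈ K | u x ≤ c} := by
  intro x hx y hy a b ha hb hab
  refine ⟨hK hx.1 hy.1 ha hb hab, ?_⟩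
  have ha' : a = 1 - b := by linarith
  subst ha'
  calc _ ≤ _ := hu hx.1 hy.1 hb (by linarith)
    _ ≤ ENNReal.ofReal (1 - b) * c + ENNReal.ofReal b * c := by
      gcongr
      exacts [hx.2, hy.2]
    _ = c := by rw [← add_mul, ← ENNReal.ofReal_add ha hb]; simp

lemma stdSlab_convex (n p : ℕ) (r : ℝ) : Convex ℝ (stdSlab n p r) := by
  intro x hx y hy a b ha hb hab
  refine ⟨fun i hi => ?_, fun i hi => ?_, ?_⟩
  · have := hx.1 i hi; have := hy.1 i hi
    simp; positivity
  · exact (convex_Ioo (-r) r) (hx.2.1 i hi) (hy.2.1 i hi) ha hb hab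
  · have := (convex_Iio r) hx.2.2 hy.2.2 ha hb hab
    simpa [Finset.sum_add_distrib, Finset.mul_sum] using this

lemma stdSlab_meas (n p : ℕ) (r : ℝ) : MeasurableSet (stdSlab n p r) := by
  have : stdSlab n p r = (⋂ i : Fin n, ⋂ (_ : (i : ℕ) < p), {x : Fin n → ℝ | 0 ≤ x i}) ∩
      ((⋂ i : Fin n, ⋂ (_ : p ≤ (i : ℕ)), {x : Fin n → ℝ | x i ∈ Set.Ioo (-r) r}) ∩
      {x | ∑ i ∈ Finset.univ.filter (fun i : Fin n => (i : ℕ) < p), x i < r}) := by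
    ext x; simp [stdSlab]
  rw [this]
  refine .inter (.iInter fun i => .iInter fun _ => ?_) (.inter (.iInter fun i => .iInter fun _ => ?_) ?_)
  · exact measurableSet_le measurable_const (measurable_pi_apply i)
  · exact measurable_pi_apply i measurableSet_Ioo
  · exact measurableSet_lt (by fun_prop) measurable_const

lemma slabFace_meas (n p : ℕ) (r : ℝ) (i : Fin n) : MeasurableSet (slabFace n p r i) :=
  (stdSlab_meas n p r).inter (measurableSet_eq_fun (measurable_pi_apply i) measurable_const)

lemma hyper_eq (m : ℕ) (i : Fin (m + 1)) : hyperplaneMeasure (m + 1) i =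
    Measure.map (fun y : Fin m → ℝ => i.insertNth (α := fun _ => ℝ) 0 y) volume := by
  have : ∀ j, SigmaFinite ((fun j => if j = i then Measure.dirac (0:ℝ) else volume) j) := by
    intro j; dsimp only; split_ifs <;> infer_instance
  have h := (measurePreserving_piFinSuccAbove
    (fun j => if j = i then Measure.dirac (0:ℝ) else volume) i).symm
  have h2 := h.map_eq
  rw [hyperplaneMeasure, ← h2]
  simp only [if_true, Fin.succAbove_ne, if_false]
  rw [Measure.dirac_prod, Measure.map_map]
  · rfl
  · exact MeasurableEquiv.measurable _
  · exact measurable_prodMk_left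

lemma face_aemeas (n p : ℕ) (r : ℝ) (i : Fin n) (u : (Fin n → ℝ) → ℝ≥0∞)
    (hu : ConvexFnOn (stdSlab n p r) u) :
    AEMeasurable ((slabFace n p r i).indicator u) (hyperplaneMeasure n i) := by
  obtain _ | m := n
  · exact i.elim0
  rw [hyper_eq]
  have hemb : MeasurableEmbedding (fun y : Fin m → ℝ => i.insertNth (α := fun _ => ℝ) 0 y) := by
    exact (MeasurableEquiv.piFinSuccAbove (fun _ => ℝ) i).symm.measurableEmbedding.comp
      (measurableEmbedding_prodMk_left (0:ℝ))
  rw [hemb.aemeasurable_map_iff]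
  have hlin : ∀ (x y : Fin m → ℝ) (a b : ℝ), i.insertNth (α := fun _ => ℝ) 0 (a • x + b • y) =
      a • i.insertNth (α := fun _ => ℝ) 0 x + b • i.insertNth (α := fun _ => ℝ) 0 y := by
    intro x y a b
    ext j
    rcases Fin.eq_self_or_eq_succAbove i j with rfl | ⟨k, rfl⟩ <;> simp
  have hpre : ∀ C : Set (Fin (m+1) → ℝ), Convex ℝ C →
      Convex ℝ {y : Fin m → ℝ | i.insertNth (α := fun _ => ℝ) 0 y ∈ C} := by
    intro C hC x hx y hy a b ha hb hab
    show _ ∈ C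
    rw [hlin]
    exact hC hx hy ha hb hab
  have := convex_aemeas {y : Fin m → ℝ | i.insertNth (α := fun _ => ℝ) 0 y ∈ stdSlab (m+1) p r}
    (fun y => u (i.insertNth (α := fun _ => ℝ) 0 y)) (hpre _ (stdSlab_convex _ _ _))
    (fun c => hpre _ (convexFn_sub (stdSlab_convex _ _ _) hu c))
  refine this.congr (Filter.Eventually.of_forall fun y => ?_)
  have h0 : (i.insertNth (α := fun _ => ℝ) 0 y : Fin (m+1) → ℝ) i = 0 := by simp
  have h1 : (i.insertNth (α := fun _ => ℝ) 0 y ∈ slabFace (m+1) p r i) ↔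
      (i.insertNth (α := fun _ => ℝ) 0 y ∈ stdSlab (m+1) p r) := ⟨fun h => h.1, fun h => ⟨h, h0⟩⟩
  by_cases h : i.insertNth (α := fun _ => ℝ) 0 y ∈ stdSlab (m+1) p r
  · exact (Set.indicator_of_mem (s := {y : Fin m → ℝ | i.insertNth (α := fun _ => ℝ) 0 y ∈
      stdSlab (m+1) p r}) h _).trans (Set.indicator_of_mem (h1.2 h) u).symm
  · exact (Set.indicator_of_notMem (s := {y : Fin m → ℝ | i.insertNth (α := fun _ => ℝ) 0 y ∈
      stdSlab (m+1) p r}) h _).trans (Set.indicator_of_notMem (mt h1.1 h) u).symm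

lemma exists_majorant {α : Type*} [MeasurableSpace α] (μ : Measure α) (f : α → ℝ≥0∞)
    (hf : AEMeasurable f μ) : ∃ g, Measurable g ∧ (∀ x, f x ≤ g x) ∧ ∫⁻ x, g x ∂μ = ∫⁻ x, f x ∂μ := by
  obtain ⟨t, ht, htm, ht0⟩ := exists_measurable_superset_of_null hf.ae_eq_mk
  refine ⟨fun x => hf.mk f x + t.indicator (fun _ => ∞) x,
    hf.measurable_mk.add (measurable_const.indicator htm), fun x => ?_, ?_⟩
  · by_cases hx : x ∈ t
    · simp [hx]
    · have : f x = hf.mk f x := by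
        by_contra h; exact hx (ht h)
      simp [hx, this]
  · rw [lintegral_add_left hf.measurable_mk, lintegral_indicator htm]
    simp [ht0, lintegral_congr_ae hf.ae_eq_mk]

lemma hyper_lintegral {n : ℕ} (i : Fin n) (f : (Fin n → ℝ) → ℝ≥0∞) (hf : Measurable f) (x) :
    ∫⁻ y, f y ∂(hyperplaneMeasure n i) =
      (∫⋯∫⁻_(Finset.univ.erase i), fun y => f (update y i 0)) x := by
  have : ∀ j, SigmaFinite ((fun j => if j = i then Measure.dirac (0:ℝ) else volume) j) := by
    intro j; dsimp only; split_ifs <;> infer_instance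
  rw [hyperplaneMeasure, lintegral_eq_lmarginal_univ x, lmarginal_erase' _ hf (Finset.mem_univ i)]
  simp only [if_true, lintegral_dirac]
  unfold lmarginal
  congr 2
  funext j
  exact if_neg (Finset.ne_of_mem_erase j.2)

def slabD (n p : ℕ) (r : ℝ) : Set (Fin n → ℝ) :=
  {x | (∀ i : Fin n, (i : ℕ) < p → 0 ≤ x i) ∧
       (∀ i : Fin n, p ≤ (i : ℕ) → x i ∈ Set.Ioo (-r) r) ∧
       ∑ i ∈ Finset.univ.filter (fun i : Fin n => (i : ℕ) < p), x i < r / 2}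

lemma mem_helper {n p : ℕ} {r : ℝ} {x z : Fin n → ℝ} (hx : x ∈ slabD n p r) {i j : Fin n}
    (hij : i ≠ j) (hi : (i : ℕ) < p) (hj : (j : ℕ) < p) (hz : ∀ k, k ≠ i → k ≠ j → z k = x k)
    (h0i : 0 ≤ z i) (h0j : 0 ≤ z j) (hs : z i + z j ≤ r / 2 + x i + x j) : z ∈ stdSlab n p r := by
  refine ⟨fun k hk => ?_, fun k hk => ?_, ?_⟩
  · by_cases h1 : k = i
    · rwa [h1]
    by_cases h2 : k = j
    · rwa [h2]
    rw [hz k h1 h2]; exact hx.1 k hk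
  · rw [hz k (by rintro rfl; omega) (by rintro rfl; omega)]; exact hx.2.1 k hk
  · have h := hx.2.2
    have key : ∑ k ∈ Finset.univ.filter (fun k : Fin n => (k : ℕ) < p), (z k - x k)
        = (z i - x i) + (z j - x j) := by
      apply Finset.sum_eq_add_of_mem i j (by simpa using hi) (by simpa using hj) hij
      intro k _ hk
      rw [hz k hk.1 hk.2, sub_self]
    rw [Finset.sum_sub_distrib] at key
    linarith

noncomputable def fA {n : ℕ} (c : ℝ) (v : Fin n → (Fin n → ℝ) → ℝ≥0∞) (i j : Fin n) (x : Fin n → ℝ) : ℝ≥0∞ :=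
  if x j < c then v i (update x i 0) else 0
noncomputable def fB {n : ℕ} (c : ℝ) (v : Fin n → (Fin n → ℝ) → ℝ≥0∞) (i j : Fin n) (x : Fin n → ℝ) : ℝ≥0∞ :=
  if 0 ≤ x j then v i (update (update x j (x j + c)) i 0) else 0
noncomputable def fC {n : ℕ} (c : ℝ) (v : Fin n → (Fin n → ℝ) → ℝ≥0∞) (i j : Fin n) (x : Fin n → ℝ) : ℝ≥0∞ :=
  if 0 ≤ x j then v j (update (update x i (x j + c)) j 0) else 0

lemma upd_meas {n : ℕ} (i j : Fin n) (c : ℝ) :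
    Measurable (fun x : Fin n → ℝ => update x i (x j + c)) := by
  rw [measurable_pi_iff]
  intro k
  by_cases h : k = i
  · subst h; simp; fun_prop
  · simp [h]; fun_prop

lemma fA_meas {n : ℕ} {c : ℝ} {v : Fin n → (Fin n → ℝ) → ℝ≥0∞} (hv : ∀ i, Measurable (v i)) (i j) :
    Measurable (fA c v i j) :=
  Measurable.ite (measurableSet_lt (measurable_pi_apply j) measurable_const)
    ((hv i).comp measurable_update_left) measurable_const
lemma fB_meas {n : ℕ} {c : ℝ} {v : Fin n → (Fin n → ℝ) → ℝ≥0∞} (hv : ∀ i, Measurable (v i)) (i j) :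
    Measurable (fB c v i j) :=
  Measurable.ite (measurableSet_le measurable_const (measurable_pi_apply j))
    ((hv i).comp (measurable_update_left.comp (upd_meas j j c))) measurable_const
lemma fC_meas {n : ℕ} {c : ℝ} {v : Fin n → (Fin n → ℝ) → ℝ≥0∞} (hv : ∀ i, Measurable (v i)) (i j) :
    Measurable (fC c v i j) :=
  Measurable.ite (measurableSet_le measurable_const (measurable_pi_apply j))
    ((hv j).comp (measurable_update_left.comp (upd_meas i j c))) measurable_const

lemma fA_inv {n : ℕ} {c : ℝ} {v : Fin n → (Fin n → ℝ) → ℝ≥0∞} {i j : Fin n} (hij : i ≠ j) (x t) :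
    fA c v i j (update x i t) = fA c v i j x := by
  simp [fA, hij.symm]
lemma fB_inv {n : ℕ} {c : ℝ} {v : Fin n → (Fin n → ℝ) → ℝ≥0∞} {i j : Fin n} (hij : i ≠ j) (x t) :
    fB c v i j (update x i t) = fB c v i j x := by
  simp [fB, hij.symm, update_comm hij.symm]
lemma fC_inv {n : ℕ} {c : ℝ} {v : Fin n → (Fin n → ℝ) → ℝ≥0∞} {i j : Fin n} (hij : i ≠ j) (x t) :
    fC c v i j (update x i t) = fC c v i j x := by
  simp [fC, hij.symm]

lemma pointwise {n p : ℕ} {r : ℝ} (hr : 0 < r) {u : (Fin n → ℝ) → ℝ≥0∞}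
    (hu : ConvexFnOn (stdSlab n p r) u) {v : Fin n → (Fin n → ℝ) → ℝ≥0∞}
    (hv : ∀ i, ∀ x ∈ slabFace n p r i, u x ≤ v i x) {i j : Fin n} (hij : i ≠ j)
    (hi : (i : ℕ) < p) (hj : (j : ℕ) < p) {x : Fin n → ℝ} (hx : x ∈ slabD n p r) :
    u x ≤ fA (r / 2) v i j x +
      ENNReal.ofReal (2 * x i / r) * (fB (r / 2) v i j x + fC (r / 2) v i j x) := by
  have hxi := hx.1 i hi
  have hxj := hx.1 j hj
  have hsum : x i + x j < r / 2 := by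
    refine lt_of_le_of_lt ?_ hx.2.2
    rw [← Finset.sum_pair hij]
    refine Finset.sum_le_sum_of_subset_of_nonneg ?_ ?_
    · intro k hk
      simp only [Finset.mem_insert, Finset.mem_singleton] at hk
      rcases hk with rfl | rfl <;> simpa
    · intro k hk _
      exact hx.1 k (by simpa using hk)
  set x0 := update x i 0 with hx0
  set y := update x i (r / 2) with hy
  set P := update (update x j (x j + r / 2)) i 0 with hP
  set Q := update (update x i (x j + r / 2)) j 0 with hQ
  have mx0 : x0 ∈ stdSlab n p r := by
    apply mem_helper hx hij hi hj <;> simp +contextual [hx0, hij.symm] <;> linarith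
  have my : y ∈ stdSlab n p r := by
    apply mem_helper hx hij hi hj <;> simp +contextual [hy, hij.symm] <;> linarith
  have mP : P ∈ stdSlab n p r := by
    apply mem_helper hx hij hi hj <;> simp +contextual [hP, hij.symm] <;> linarith
  have mQ : Q ∈ stdSlab n p r := by
    apply mem_helper hx hij hi hj <;> simp +contextual [hQ, hij] <;> linarith
  have ht1 : 2 * x i / r ≤ 1 := by rw [div_le_one hr]; linarith
  have ht0 : 0 ≤ 2 * x i / r := by positivity
  have e1 : x = (1 - 2 * x i / r) • x0 + (2 * x i / r) • y := by
    ext k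
    by_cases hk : k = i
    · subst hk; simp [hx0, hy]; field_simp
    · simp [hx0, hy, hk]; ring
  have hd : 0 < x j + r / 2 := by linarith
  have hw1 : x j / (x j + r / 2) ≤ 1 := by rw [div_le_one hd]; linarith
  have hw0 : 0 ≤ x j / (x j + r / 2) := by positivity
  have e2 : y = (1 - x j / (x j + r / 2)) • Q + (x j / (x j + r / 2)) • P := by
    ext k
    by_cases hk : k = i
    · subst hk; simp [hP, hQ, hy, hij]; field_simp; ring
    · by_cases hk' : k = j
      · subst hk'; simp [hP, hQ, hy, hk]; field_simp
      · simp [hP, hQ, hy, hk, hk']; ring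
  have b1 := hu mx0 my ht0 ht1
  rw [← e1] at b1
  have b2 := hu mQ mP hw0 hw1
  rw [← e2] at b2
  have uy : u y ≤ u P + u Q := by
    refine b2.trans ?_
    rw [add_comm]
    gcongr
    · exact mul_le_of_le_one_left' (by simpa using hw1)
    · exact mul_le_of_le_one_left' (by simpa using hw0)
  have k1 : u x0 ≤ fA (r / 2) v i j x := by
    rw [fA, if_pos (by linarith)]
    exact hv i _ ⟨mx0, by simp [hx0]⟩
  have k2 : u P ≤ fB (r / 2) v i j x := by
    rw [fB, if_pos hxj]
    exact hv i _ ⟨mP, by simp [hP]⟩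
  have k3 : u Q ≤ fC (r / 2) v i j x := by
    rw [fC, if_pos hxj]
    exact hv j _ ⟨mQ, by simp [hQ]⟩
  refine b1.trans ?_
  gcongr
  · exact (mul_le_of_le_one_left' (by simpa using ht0)).trans k1
  · exact uy.trans (add_le_add k2 k3)

lemma lm_split {n : ℕ} {c : ℝ} {v : Fin n → (Fin n → ℝ) → ℝ≥0∞} (hv : ∀ i, Measurable (v i))
    {i j : Fin n} (hij : i ≠ j) (x) :
    (∫⋯∫⁻_(Finset.univ.erase i), fA c v i j) x + (∫⋯∫⁻_(Finset.univ.erase i), fB c v i j) x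
      = ∫⁻ y, v i y ∂(hyperplaneMeasure n i) := by
  rw [hyper_lintegral i _ (hv i) x]
  have hj : j ∈ Finset.univ.erase i := by simp [hij.symm]
  have hm : Measurable fun y => v i (update y i 0) := (hv i).comp measurable_update_left
  rw [lmarginal_erase' _ (fA_meas hv i j) hj, lmarginal_erase' _ (fB_meas hv i j) hj,
    lmarginal_erase' _ hm hj]
  unfold lmarginal
  rw [← lintegral_add_left]
  swap
  · have : Measurable fun x : Fin n → ℝ => ∫⁻ t, fA c v i j (update x j t) := by
      rw [← lmarginal_singleton (μ := fun _ => volume)]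
      exact Measurable.lmarginal _ (fA_meas hv i j)
    exact this.comp measurable_updateFinset
  congr 1
  ext w
  set z := updateFinset x ((Finset.univ.erase i).erase j) w
  have hmz : Measurable fun t : ℝ => v i (update (update z j t) i 0) :=
    hm.comp (measurable_update z)
  have e2 : ∫⁻ t, fB c v i j (update z j t) =
      ∫⁻ t, if c ≤ t then v i (update (update z j t) i 0) else 0 := by
    rw [← lintegral_add_right_eq_self (fun t => if c ≤ t then v i (update (update z j t) i 0) else 0) c]
    congr 1; ext t
    simp [fB]
  show (∫⁻ t, fA c v i j (update z j t)) + (∫⁻ t, fB c v i j (update z j t)) =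
    ∫⁻ t, v i (update (update z j t) i 0)
  rw [e2, ← lintegral_add_right]
  · congr 1; ext t
    by_cases h : t < c
    · simp [fA, h, not_le.2 h]
    · simp [fA, h, not_lt.1 h]
  · exact Measurable.ite measurableSet_Ici hmz measurable_const

lemma lm_swap {n : ℕ} {c : ℝ} {v : Fin n → (Fin n → ℝ) → ℝ≥0∞} (hv : ∀ i, Measurable (v i))
    {i j : Fin n} (hij : i ≠ j) (x) :
    (∫⋯∫⁻_(Finset.univ.erase i), fC c v i j) x = (∫⋯∫⁻_(Finset.univ.erase j), fB c v j i) x := by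
  have hj : j ∈ Finset.univ.erase i := by simp [hij.symm]
  have hi : i ∈ Finset.univ.erase j := by simp [hij]
  rw [lmarginal_erase' _ (fC_meas hv i j) hj, lmarginal_erase' _ (fB_meas hv j i) hi,
    Finset.erase_right_comm]
  congr 1
  ext z
  congr 1
  ext t
  simp [fC, fB, update_comm hij]

lemma averaging {n p : ℕ} (hpn : p ≤ n) {r : ℝ} (hr : 0 < r) {u g : (Fin n → ℝ) → ℝ≥0∞}
    (hu : ConvexFnOn (stdSlab n p r) u) (hg : Measurable g) {x : Fin n → ℝ}
    (hx : x ∈ stdSlab n p (r / 2))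
    (hug : ∀ z ∈ slabD n p r, (∀ k : Fin n, (k : ℕ) < p → z k = x k) → u z ≤ g z) :
    ENNReal.ofReal (r ^ (n - p)) * u x ≤
      (∫⋯∫⁻_(Finset.univ.filter (fun i : Fin n => (i : ℕ) < p))ᶜ, g) x := by
  set S := Finset.univ.filter (fun i : Fin n => (i : ℕ) < p) with hS
  have hcard : Fintype.card (↥Sᶜ) = n - p := by
    rw [Fintype.card_coe, Finset.card_compl, Fintype.card_fin, hS, Fin.card_filter_val_lt,
      min_eq_right hpn]
  set x0 : ↥Sᶜ → ℝ := fun k => x k with hx0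
  have hvol : volume (Metric.ball x0 (r / 2)) = ENNReal.ofReal (r ^ (n - p)) := by
    rw [Real.volume_pi_ball _ (by positivity), hcard]; congr 2; ring
  have mem : ∀ y ∈ Metric.ball x0 (r / 2), updateFinset x Sᶜ y ∈ slabD n p r ∧
      updateFinset x Sᶜ y ∈ stdSlab n p r ∧
      (∀ k : Fin n, (k : ℕ) < p → updateFinset x Sᶜ y k = x k) := by
    intro y hy
    have h1 : ∀ k : Fin n, (k : ℕ) < p → updateFinset x Sᶜ y k = x k := by
      intro k hk; simp [updateFinset, hS, hk]
    have h2 : ∀ k : Fin n, p ≤ (k : ℕ) → updateFinset x Sᶜ y k ∈ Set.Ioo (-r) r := by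
      intro k hk
      have hk' : k ∈ Sᶜ := by simp [hS, hk]
      have := (dist_pi_lt_iff (by positivity)).1 (Metric.mem_ball.1 hy) ⟨k, hk'⟩
      rw [Real.dist_eq, abs_lt] at this
      have h3 := hx.2.1 k hk
      simp only [hx0] at this
      simp only [updateFinset, hk', dif_pos, Set.mem_Ioo] at *
      constructor <;> linarith [h3.1, h3.2, this.1, this.2]
    have h3 : ∑ k ∈ S, updateFinset x Sᶜ y k < r / 2 := by
      refine lt_of_eq_of_lt (Finset.sum_congr rfl fun k hk => h1 k ?_) hx.2.2
      simpa [hS] using hk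
    have h4 : ∀ k : Fin n, (k : ℕ) < p → 0 ≤ updateFinset x Sᶜ y k := by
      intro k hk; rw [h1 k hk]; exact hx.1 k hk
    exact ⟨⟨h4, h2, h3⟩, ⟨h4, h2, by linarith⟩, h1⟩
  have hgm : Measurable fun y => g (updateFinset x Sᶜ y) := hg.comp measurable_updateFinset
  set B := Metric.ball x0 (r / 2) with hB
  have refl_mem : ∀ y, (x0 + x0) - y ∈ B ↔ y ∈ B := by
    intro y
    rw [hB, Metric.mem_ball, Metric.mem_ball, dist_eq_norm, dist_eq_norm, ← norm_neg]
    congr! 2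
    abel
  set F : (↥Sᶜ → ℝ) → ℝ≥0∞ := B.indicator fun y => g (updateFinset x Sᶜ y) with hF
  have hFm : Measurable F := hgm.indicator measurableSet_ball
  have hFm' : Measurable fun y => F ((x0 + x0) - y) := hFm.comp (measurable_const.sub measurable_id)
  have key : ∀ y ∈ B, u x ≤ ENNReal.ofReal (1/2) * F y + ENNReal.ofReal (1/2) * F ((x0 + x0) - y) := by
    intro y hy
    have hy' := (refl_mem y).2 hy
    have h := hu (mem y hy).2.1 (mem _ hy').2.1 (t := 1/2) (by norm_num) (by norm_num)
    have e : (1 - 1/2 : ℝ) • updateFinset x Sᶜ y + (1/2 : ℝ) • updateFinset x Sᶜ ((x0 + x0) - y) = x := by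
      ext k
      by_cases hk : k ∈ Sᶜ
      · simp only [Pi.add_apply, Pi.smul_apply, updateFinset, hk, dif_pos, Pi.sub_apply, hx0, smul_eq_mul]
        ring
      · simp only [Pi.add_apply, Pi.smul_apply, updateFinset, hk, dif_neg, not_false_iff, smul_eq_mul]
        ring
    rw [e] at h
    refine h.trans ?_
    rw [hF, Set.indicator_of_mem hy, Set.indicator_of_mem hy']
    have : (1 - 1/2 : ℝ) = 1/2 := by norm_num
    rw [this]
    gcongr
    · exact hug _ (mem y hy).1 (mem y hy).2.2
    · exact hug _ (mem _ hy').1 (mem _ hy').2.2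
  calc ENNReal.ofReal (r ^ (n - p)) * u x = ∫⁻ y in B, u x := by
        rw [setLIntegral_const, hvol, mul_comm]
    _ ≤ ∫⁻ y in B, (ENNReal.ofReal (1/2) * F y + ENNReal.ofReal (1/2) * F ((x0 + x0) - y)) :=
        setLIntegral_mono' measurableSet_ball key
    _ ≤ ∫⁻ y, (ENNReal.ofReal (1/2) * F y + ENNReal.ofReal (1/2) * F ((x0 + x0) - y)) :=
        setLIntegral_le_lintegral _ _
    _ = ∫⁻ y, F y := by
        rw [lintegral_add_left (hFm.const_mul _), lintegral_const_mul _ hFm,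
          lintegral_const_mul _ hFm',
          lintegral_sub_left_eq_self, ← add_mul, ← ENNReal.ofReal_add (by norm_num) (by norm_num)]
        norm_num
    _ ≤ ∫⁻ y, g (updateFinset x Sᶜ y) := lintegral_mono fun y => Set.indicator_le_self _ _ _
    _ = _ := rfl

lemma outer_bound {n p : ℕ} (hpn : p ≤ n) {r : ℝ} (hr : 0 < r) {u Φ : (Fin n → ℝ) → ℝ≥0∞} {K : ℝ≥0∞}
    {q : ℝ} (hq : 0 ≤ q) (hΦ : Measurable Φ)
    (hK : ∀ x, (∫⋯∫⁻_(Finset.univ.filter (fun i : Fin n => (i : ℕ) < p)), Φ) x ≤ K)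
    (hu : ∀ x ∈ stdSlab n p (r / 2), (ENNReal.ofReal (r ^ (n - p)) * u x) ^ q ≤ Φ x) :
    ENNReal.ofReal (r ^ (n - p)) ^ q * ∫⁻ x in stdSlab n p (r / 2), u x ^ q
      ≤ ENNReal.ofReal (r ^ (n - p)) * K := by
  set S := Finset.univ.filter (fun i : Fin n => (i : ℕ) < p) with hS
  have hcard : Fintype.card (↥Sᶜ) = n - p := by
    rw [Fintype.card_coe, Finset.card_compl, Fintype.card_fin, hS, Fin.card_filter_val_lt,
      min_eq_right hpn]
  set B := Metric.ball (0 : ↥Sᶜ → ℝ) (r / 2) with hB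
  have hvol : volume B = ENNReal.ofReal (r ^ (n - p)) := by
    rw [Real.volume_pi_ball _ (by positivity), hcard]; congr 2; ring
  set bx : (Fin n → ℝ) → ℝ≥0∞ := fun x => B.indicator (fun _ => 1) (Sᶜ.restrict x) with hbx
  have hbm : Measurable bx :=
    (measurable_const.indicator measurableSet_ball).comp (Finset.measurable_restrict _)
  have h1 : ENNReal.ofReal (r ^ (n - p)) ^ q * ∫⁻ x in stdSlab n p (r / 2), u x ^ q ≤
      ∫⁻ x, bx x * Φ x := by
    rw [← lintegral_const_mul' _ _ (by finiteness), ← lintegral_indicator (stdSlab_meas _ _ _)]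
    refine lintegral_mono fun x => ?_
    by_cases hx : x ∈ stdSlab n p (r / 2)
    · rw [Set.indicator_of_mem hx, ← ENNReal.mul_rpow_of_nonneg _ _ hq]
      have : bx x = 1 := by
        rw [hbx]
        refine Set.indicator_of_mem ?_ _
        rw [hB, Metric.mem_ball, dist_pi_lt_iff (by positivity)]
        rintro ⟨k, hk⟩
        have := hx.2.1 k (by simpa [hS] using hk)
        rw [Real.dist_eq, abs_lt]
        simpa using this
      rw [this, one_mul]
      exact hu x hx
    · simp [hx]
  refine h1.trans ?_
  rw [volume_pi, lintegral_eq_lmarginal_univ (0 : Fin n → ℝ), ← Finset.union_compl S,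
    lmarginal_union' _ (fun x => bx x * Φ x) (hbm.mul hΦ) disjoint_compl_right]
  have h2 : (∫⋯∫⁻_S, fun x => bx x * Φ x) ≤ fun x => bx x * K := by
    intro x
    have : (∫⋯∫⁻_S, fun x => bx x * Φ x) x = bx x * (∫⋯∫⁻_S, Φ) x := by
      unfold lmarginal
      have hm : Measurable fun y => Φ (updateFinset x S y) := hΦ.comp measurable_updateFinset
      rw [← lintegral_const_mul _ hm]
      congr 1; ext y
      have : Sᶜ.restrict (updateFinset x S y) = Sᶜ.restrict x := by
        ext ⟨k, hk⟩
        simp [updateFinset, Finset.mem_compl.1 hk]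
      simp only [hbx, this]
    rw [this]
    exact mul_le_mul' le_rfl (hK x)
  refine (lmarginal_mono h2 _).trans ?_
  have hres : ∀ y, Sᶜ.restrict (updateFinset (0 : Fin n → ℝ) Sᶜ y) = y := by
    intro y; ext ⟨k, hk⟩
    have hk2 : k ∈ Sᶜ := hk
    simp only [Finset.restrict, updateFinset, hk2, dif_pos]
  unfold lmarginal
  simp only [hbx, hres]
  have hBm : MeasurableSet B := measurableSet_ball
  rw [lintegral_mul_const _ (measurable_const.indicator hBm), lintegral_indicator hBm]
  simp only [lintegral_const, MeasurableSet.univ, Measure.restrict_apply, Set.univ_inter, one_mul]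
  exact le_of_eq (by rw [← hvol]; rfl)

lemma lm_inv {n : ℕ} {T : Finset (Fin n)} {f : (Fin n → ℝ) → ℝ≥0∞} (hf : Measurable f) {i : Fin n}
    (hi : i ∉ T) (h : ∀ x t, f (update x i t) = f x) (x t) :
    (∫⋯∫⁻_T, f) (update x i t) = (∫⋯∫⁻_T, f) x := by
  rw [lmarginal_update_of_notMem hf hi]
  have : f ∘ (fun y => update y i t) = f := funext fun y => h y t
  rw [this]

lemma lm_comb {n : ℕ} {S : Finset (Fin n)} {f : (Fin n → ℝ) → ℝ≥0∞} (hf : Measurable f) {i : Fin n}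
    (hi : i ∈ S) (x) :
    (∫⋯∫⁻_(S.erase i), ∫⋯∫⁻_Sᶜ, f) x = (∫⋯∫⁻_(Finset.univ.erase i), f) x := by
  rw [← lmarginal_union _ _ hf]
  · congr 1
    ext k
    by_cases hk : k ∈ S <;> simp [hk]
    rintro rfl; exact hk hi
  · exact Finset.disjoint_of_subset_left (Finset.erase_subset _ _) disjoint_compl_right

lemma lm_add {n : ℕ} {T : Finset (Fin n)} {f g : (Fin n → ℝ) → ℝ≥0∞} (hf : Measurable f) (x) :
    (∫⋯∫⁻_T, fun x => f x + g x) x = (∫⋯∫⁻_T, f) x + (∫⋯∫⁻_T, g) x :=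
  lintegral_add_left (hf.comp measurable_updateFinset) _

lemma lm_cmul {n : ℕ} {T : Finset (Fin n)} {f : (Fin n → ℝ) → ℝ≥0∞} (hf : Measurable f) (c) (x) :
    (∫⋯∫⁻_T, fun x => c * f x) x = c * (∫⋯∫⁻_T, f) x :=
  lintegral_const_mul _ (hf.comp measurable_updateFinset)

lemma lw_two {n : ℕ} {S : Finset (Fin n)} {i j : Fin n} (hij : i ≠ j) (hS : S = {i, j})
    {f g : (Fin n → ℝ) → ℝ≥0∞} (hf : Measurable f) (hg : Measurable g)
    (hfi : ∀ x t, f (update x i t) = f x) (hgj : ∀ x t, g (update x j t) = g x) (x) :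
    (∫⋯∫⁻_S, fun x => (∫⋯∫⁻_Sᶜ, f) x * (∫⋯∫⁻_Sᶜ, g) x) x ≤
      (∫⋯∫⁻_(Finset.univ.erase i), f) x * (∫⋯∫⁻_(Finset.univ.erase j), g) x := by
  have hi : i ∈ S := by simp [hS]
  have hj : j ∈ S := by simp [hS]
  have mf : Measurable (∫⋯∫⁻_Sᶜ, f) := Measurable.lmarginal _ hf
  have mg : Measurable (∫⋯∫⁻_Sᶜ, g) := Measurable.lmarginal _ hg
  have h := lw_ineq S 1 zero_le_one (by rw [hS, Finset.card_pair hij]; norm_num)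
    (fun k => if k = i then (∫⋯∫⁻_Sᶜ, f) else (∫⋯∫⁻_Sᶜ, g))
    (by intro k; by_cases h : k = i <;> simp only [h, if_true, if_false] <;> assumption)
    (by
      intro k hk y t
      by_cases h : k = i
      · subst h
        simp only [if_true]
        exact lm_inv hf (by simp [hi]) hfi y t
      · have : k = j := by simpa [hS, h] using hk
        subst this
        simp only [h, if_false]
        exact lm_inv hg (by simp [hj]) hgj y t) S subset_rfl x
  have e : ∀ F : Fin n → ℝ≥0∞, ∏ k ∈ S, F k = F i * F j := by
    intro F; rw [hS, Finset.prod_pair hij]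
  simp only [e, if_true, hij.symm, if_false, ENNReal.rpow_one] at h
  rwa [lm_comb hf hi, lm_comb hg hj] at h

lemma quad_ineq (a b c d : ℝ≥0∞) :
    a * c + (b + d) * c + a * (d + b) + ENNReal.ofReal (1/4) * ((b + d) * (d + b))
      ≤ (a + b) ^ 2 + (c + d) ^ 2 := by
  by_cases h : (a + b) ^ 2 + (c + d) ^ 2 = ∞
  · rw [h]; exact le_top
  have ha : a ≠ ∞ := by rintro rfl; simp at h
  have hb : b ≠ ∞ := by rintro rfl; simp at h
  have hc : c ≠ ∞ := by rintro rfl; simp at h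
  have hd : d ≠ ∞ := by rintro rfl; simp at h
  lift a to NNReal using ha
  lift b to NNReal using hb
  lift c to NNReal using hc
  lift d to NNReal using hd
  have : ENNReal.ofReal (1/4) = ((1/4 : NNReal) : ℝ≥0∞) := by
    rw [← ENNReal.ofReal_coe_nnreal]; norm_num
  rw [this]
  norm_cast
  rw [← NNReal.coe_le_coe]
  push_cast
  have := a.2; have := b.2; have := c.2; have := d.2
  nlinarith [sq_nonneg ((a:ℝ) - c), sq_nonneg ((d:ℝ) - a), sq_nonneg ((b:ℝ) - c), sq_nonneg ((b:ℝ) - d),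
    mul_nonneg a.2 b.2, mul_nonneg c.2 d.2]

lemma final_const {n p : ℕ} (hp : 2 ≤ p) (hpn : p ≤ n) {r : ℝ} (hr : 0 < r) {I K T : ℝ≥0∞}
    (h : ENNReal.ofReal (r ^ (n - p)) ^ ((p : ℝ) / ((p : ℝ) - 1)) * I ≤ ENNReal.ofReal (r ^ (n - p)) * K)
    (hK : K ≤ ENNReal.ofReal ((p : ℝ) - 1) * T) :
    I ≤ ENNReal.ofReal (((p : ℝ) - 1) * (2 / r) ^ (((n : ℝ) - (p : ℝ)) / ((p : ℝ) - 1))) * T := by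
  have hp1 : (0 : ℝ) < (p : ℝ) - 1 := by
    have : (2 : ℝ) ≤ p := by exact_mod_cast hp
    linarith
  set R := ENNReal.ofReal (r ^ (n - p)) with hR
  set q := (p : ℝ) / ((p : ℝ) - 1) with hq
  have hrp : 0 < r ^ (n - p) := by positivity
  have hR0 : R ≠ 0 := by simp [hR, hrp]
  have hRt : R ≠ ∞ := by simp [hR]
  have h1 : I ≤ R ^ (1 - q) * K := by
    calc I = R ^ (-q) * (R ^ q * I) := by
          rw [← mul_assoc, ← ENNReal.rpow_add _ _ hR0 hRt]; simp
      _ ≤ R ^ (-q) * (R * K) := by gcongr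
      _ = R ^ (1 - q) * K := by
          rw [← mul_assoc, sub_eq_neg_add, ENNReal.rpow_add _ _ hR0 hRt, ENNReal.rpow_one]
  have h2 : R ^ (1 - q) ≤ ENNReal.ofReal ((2 / r) ^ (((n : ℝ) - (p : ℝ)) / ((p : ℝ) - 1))) := by
    rw [hR, ENNReal.ofReal_rpow_of_pos hrp]
    apply ENNReal.ofReal_le_ofReal
    have e0 : (0:ℝ) ≤ ((n : ℝ) - (p : ℝ)) / ((p : ℝ) - 1) := by
      have : (p : ℝ) ≤ n := by exact_mod_cast hpn
      apply div_nonneg <;> linarith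
    have e : (r ^ (n - p)) ^ (1 - q) = (1 / r) ^ (((n : ℝ) - (p : ℝ)) / ((p : ℝ) - 1)) := by
      rw [← Real.rpow_natCast, ← Real.rpow_mul hr.le, one_div, Real.inv_rpow hr.le,
        ← Real.rpow_neg hr.le, Nat.cast_sub hpn]
      congr 1
      rw [hq]; field_simp; ring
    rw [e]
    apply Real.rpow_le_rpow (by positivity) _ e0
    gcongr; norm_num
  calc I ≤ R ^ (1 - q) * K := h1
    _ ≤ ENNReal.ofReal ((2 / r) ^ (((n : ℝ) - (p : ℝ)) / ((p : ℝ) - 1))) *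
        (ENNReal.ofReal ((p : ℝ) - 1) * T) := by gcongr
    _ = _ := by rw [ENNReal.ofReal_mul hp1.le]; ring

/-- Local Poincaré type estimate: for `2 ≤ p ≤ n`, `r > 0` and convex
`u : Δⁿ_p(r) → [0,∞]`,
`∫_{Δⁿ_p(r/2)} u^{p/(p−1)} dλⁿ ≤ (p−1)·(2/r)^{(n−p)/(p−1)} · ∑_{i<p} (∫_{∂ᵢΔⁿ_p(r)} u dx')^{p/(p−1)}`. -/
theorem local_poincare_estimate (n p : ℕ) (hp : 2 ≤ p) (hpn : p ≤ n)
    (r : ℝ) (hr : 0 < r) (u : (Fin n → ℝ) → ℝ≥0∞)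
    (hu : ConvexFnOn (stdSlab n p r) u) :
    ∫⁻ x in stdSlab n p (r / 2), u x ^ ((p : ℝ) / ((p : ℝ) - 1))
      ≤ ENNReal.ofReal (((p : ℝ) - 1) * (2 / r) ^ (((n : ℝ) - (p : ℝ)) / ((p : ℝ) - 1)))
          * ∑ i ∈ Finset.univ.filter (fun i : Fin n => (i : ℕ) < p),
              (faceIntegral n p r i u) ^ ((p : ℝ) / ((p : ℝ) - 1)) := by
  have hp2 : (2 : ℝ) ≤ p := by exact_mod_cast hp
  have hp1 : (0 : ℝ) < (p : ℝ) - 1 := by linarith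
  have hmaj : ∀ i : Fin n, ∃ g : (Fin n → ℝ) → ℝ≥0∞, Measurable g ∧
      (∀ x ∈ slabFace n p r i, u x ≤ g x) ∧
      ∫⁻ x, g x ∂(hyperplaneMeasure n i) = faceIntegral n p r i u := by
    intro i
    obtain ⟨g, hg, hle, hint⟩ := exists_majorant _ _ (face_aemeas n p r i u hu)
    refine ⟨g, hg, fun x hx => ?_, ?_⟩
    · simpa [hx] using hle x
    · rw [hint, lintegral_indicator (slabFace_meas n p r i)]; rfl
  choose v hvm hvu hvi using hmaj
  set S := Finset.univ.filter (fun i : Fin n => (i : ℕ) < p) with hS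
  have hmemS : ∀ i : Fin n, i ∈ S ↔ (i : ℕ) < p := by simp [hS]
  have hcard : S.card = p := by rw [hS, Fin.card_filter_val_lt, min_eq_right hpn]
  have hq0 : 0 ≤ (p : ℝ) / ((p : ℝ) - 1) := by positivity
  set A : Fin n → ℝ≥0∞ := fun i => faceIntegral n p r i u with hA
  have hmA : ∀ i j, Measurable (fA (r/2) v i j) := fA_meas hvm
  have hmB : ∀ i j, Measurable (fB (r/2) v i j) := fB_meas hvm
  have hmC : ∀ i j, Measurable (fC (r/2) v i j) := fC_meas hvm
  have hmH : ∀ i j, Measurable (fun z => fB (r/2) v i j z + fC (r/2) v i j z) :=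
    fun i j => (hmB i j).add (hmC i j)
  have havg : ∀ i j : Fin n, i ≠ j → (i : ℕ) < p → (j : ℕ) < p → ∀ x ∈ stdSlab n p (r / 2),
      ENNReal.ofReal (r ^ (n - p)) * u x ≤ (∫⋯∫⁻_Sᶜ, fA (r/2) v i j) x +
        ENNReal.ofReal (2 * x i / r) *
          (∫⋯∫⁻_Sᶜ, fun z => fB (r/2) v i j z + fC (r/2) v i j z) x := by
    intro i j hij hi hj x hx
    rw [← lm_cmul (hmH i j), ← lm_add (hmA i j)]
    refine averaging hpn hr hu ((hmA i j).add ((hmH i j).const_mul _)) hx ?_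
    intro z hz hzx
    rw [← hzx i hi]
    exact pointwise hr hu hvu hij hi hj hz
  have h0 : 0 < n := by omega
  have h1 : 1 < n := by omega
  set i0 : Fin n := ⟨0, h0⟩ with hi0
  set i1 : Fin n := ⟨1, h1⟩ with hi1
  have h01 : i0 ≠ i1 := by simp [hi0, hi1]
  have hi0p : (i0 : ℕ) < p := by simp [hi0]; omega
  have hi1p : (i1 : ℕ) < p := by simp [hi1]; omega
  rcases hp.eq_or_lt with hp' | hp'
  · -- p = 2
    have hS2 : S = {i0, i1} := by
      ext k
      rw [hmemS, ← hp']
      simp [hi0, hi1, Fin.ext_iff]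
      omega
    have hqe : (p : ℝ) / ((p : ℝ) - 1) = 2 := by rw [← hp']; norm_num
    set H0 := fun z => fB (r/2) v i0 i1 z + fC (r/2) v i0 i1 z with hH0
    set H1 := fun z => fB (r/2) v i1 i0 z + fC (r/2) v i1 i0 z with hH1
    have mH0 : Measurable H0 := hmH _ _
    have mH1 : Measurable H1 := hmH _ _
    have iH0 : ∀ x t, H0 (update x i0 t) = H0 x := fun x t => by
      simp only [hH0, fB_inv h01, fC_inv h01]
    have iH1 : ∀ x t, H1 (update x i1 t) = H1 x := fun x t => by
      simp only [hH1, fB_inv h01.symm, fC_inv h01.symm]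
    have ma0 : Measurable (∫⋯∫⁻_Sᶜ, fA (r/2) v i0 i1) := Measurable.lmarginal _ (hmA _ _)
    have ma1 : Measurable (∫⋯∫⁻_Sᶜ, fA (r/2) v i1 i0) := Measurable.lmarginal _ (hmA _ _)
    have mh0 : Measurable (∫⋯∫⁻_Sᶜ, H0) := Measurable.lmarginal _ mH0
    have mh1 : Measurable (∫⋯∫⁻_Sᶜ, H1) := Measurable.lmarginal _ mH1
    set x0 : Fin n → ℝ := 0
    refine final_const hp hpn hr (outer_bound hpn hr hq0 (K := A i0 ^ 2 + A i1 ^ 2)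
      (Φ := fun x => (((∫⋯∫⁻_Sᶜ, fA (r/2) v i0 i1) x * (∫⋯∫⁻_Sᶜ, fA (r/2) v i1 i0) x
        + (∫⋯∫⁻_Sᶜ, H0) x * (∫⋯∫⁻_Sᶜ, fA (r/2) v i1 i0) x)
        + (∫⋯∫⁻_Sᶜ, fA (r/2) v i0 i1) x * (∫⋯∫⁻_Sᶜ, H1) x)
        + ENNReal.ofReal (1/4) * ((∫⋯∫⁻_Sᶜ, H0) x * (∫⋯∫⁻_Sᶜ, H1) x)) ?_ ?_ ?_) ?_
    · exact (((ma0.mul ma1).add (mh0.mul ma1)).add (ma0.mul mh1)).add ((mh0.mul mh1).const_mul _)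
    · intro x
      have m1 : Measurable fun x => (∫⋯∫⁻_Sᶜ, fA (r/2) v i0 i1) x * (∫⋯∫⁻_Sᶜ, fA (r/2) v i1 i0) x :=
        ma0.mul ma1
      have m2 : Measurable fun x => (∫⋯∫⁻_Sᶜ, fA (r/2) v i0 i1) x * (∫⋯∫⁻_Sᶜ, fA (r/2) v i1 i0) x
          + (∫⋯∫⁻_Sᶜ, H0) x * (∫⋯∫⁻_Sᶜ, fA (r/2) v i1 i0) x := m1.add (mh0.mul ma1)
      have m3 : Measurable fun x => ((∫⋯∫⁻_Sᶜ, fA (r/2) v i0 i1) x * (∫⋯∫⁻_Sᶜ, fA (r/2) v i1 i0) x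
          + (∫⋯∫⁻_Sᶜ, H0) x * (∫⋯∫⁻_Sᶜ, fA (r/2) v i1 i0) x)
          + (∫⋯∫⁻_Sᶜ, fA (r/2) v i0 i1) x * (∫⋯∫⁻_Sᶜ, H1) x := m2.add (ma0.mul mh1)
      have m4 : Measurable fun x => (∫⋯∫⁻_Sᶜ, H0) x * (∫⋯∫⁻_Sᶜ, H1) x := mh0.mul mh1
      rw [← hS, lm_add m3, lm_add m2, lm_add m1, lm_cmul m4]
      have eH0 : (∫⋯∫⁻_(Finset.univ.erase i0), H0) x = (∫⋯∫⁻_(Finset.univ.erase i0), fB (r/2) v i0 i1) x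
          + (∫⋯∫⁻_(Finset.univ.erase i1), fB (r/2) v i1 i0) x := by
        rw [hH0, lm_add (hmB _ _), lm_swap hvm h01]
      have eH1 : (∫⋯∫⁻_(Finset.univ.erase i1), H1) x = (∫⋯∫⁻_(Finset.univ.erase i1), fB (r/2) v i1 i0) x
          + (∫⋯∫⁻_(Finset.univ.erase i0), fB (r/2) v i0 i1) x := by
        rw [hH1, lm_add (hmB _ _), lm_swap hvm h01.symm]
      have eA0 := lm_split (c := r/2) hvm h01 x
      have eA1 := lm_split (c := r/2) hvm h01.symm x
      rw [hvi] at eA0 eA1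
      have Q := quad_ineq ((∫⋯∫⁻_(Finset.univ.erase i0), fA (r/2) v i0 i1) x)
        ((∫⋯∫⁻_(Finset.univ.erase i0), fB (r/2) v i0 i1) x)
        ((∫⋯∫⁻_(Finset.univ.erase i1), fA (r/2) v i1 i0) x)
        ((∫⋯∫⁻_(Finset.univ.erase i1), fB (r/2) v i1 i0) x)
      rw [eA0, eA1, ← eH0, ← eH1] at Q
      refine le_trans ?_ Q
      gcongr
      · exact lw_two h01 hS2 (hmA _ _) (hmA _ _) (fA_inv h01) (fA_inv h01.symm) x
      · exact lw_two h01 hS2 mH0 (hmA _ _) iH0 (fA_inv h01.symm) x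
      · exact lw_two h01 hS2 (hmA _ _) mH1 (fA_inv h01) iH1 x
      · exact lw_two h01 hS2 mH0 mH1 iH0 iH1 x
    · intro x hx
      rw [hqe, ENNReal.rpow_two, sq]
      have b0 := havg i0 i1 h01 hi0p hi1p x hx
      have b1 := havg i1 i0 h01.symm hi1p hi0p x hx
      have hx0 := hx.1 i0 hi0p
      have hx1 := hx.1 i1 hi1p
      have hs : x i0 + x i1 < r / 2 := by
        have := hx.2.2
        rw [← hS, hS2, Finset.sum_pair h01] at this
        exact this
      refine (mul_le_mul' b0 b1).trans ?_
      have t0 : ENNReal.ofReal (2 * x i0 / r) ≤ 1 := by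
        rw [ENNReal.ofReal_le_one, div_le_one hr]; linarith
      have t1 : ENNReal.ofReal (2 * x i1 / r) ≤ 1 := by
        rw [ENNReal.ofReal_le_one, div_le_one hr]; linarith
      have t01 : ENNReal.ofReal (2 * x i0 / r) * ENNReal.ofReal (2 * x i1 / r) ≤ ENNReal.ofReal (1/4) := by
        rw [← ENNReal.ofReal_mul (by positivity)]
        apply ENNReal.ofReal_le_ofReal
        rw [div_mul_div_comm, div_le_div_iff₀ (by positivity) (by norm_num)]
        nlinarith [sq_nonneg (x i0 - x i1)]
      generalize (∫⋯∫⁻_Sᶜ, fA (r/2) v i0 i1) x = a0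
      generalize (∫⋯∫⁻_Sᶜ, fA (r/2) v i1 i0) x = a1
      generalize (∫⋯∫⁻_Sᶜ, H0) x = c0
      generalize (∫⋯∫⁻_Sᶜ, H1) x = c1
      generalize ENNReal.ofReal (2 * x i0 / r) = s0 at *
      generalize ENNReal.ofReal (2 * x i1 / r) = s1 at *
      calc (a0 + s0 * c0) * (a1 + s1 * c1)
          = a0 * a1 + s0 * (c0 * a1) + s1 * (a0 * c1) + s0 * s1 * (c0 * c1) := by ring
        _ ≤ a0 * a1 + 1 * (c0 * a1) + 1 * (a0 * c1) + ENNReal.ofReal (1/4) * (c0 * c1) := by gcongr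
        _ = _ := by simp only [one_mul]
    · rw [hS2, Finset.sum_pair h01, hqe, ENNReal.rpow_two, ENNReal.rpow_two]
      have hc : ENNReal.ofReal ((p : ℝ) - 1) = 1 := by rw [← hp']; norm_num
      rw [hc, one_mul]
  · -- p ≥ 3
    set σ : Fin n → Fin n := fun i => if i = i0 then i1 else i0 with hσ
    have hσne : ∀ i, i ≠ σ i := by
      intro i; by_cases h : i = i0
      · simp [hσ, h, h01]
      · simp [hσ, h]
    have hσp : ∀ i, (σ i : ℕ) < p := by
      intro i; by_cases h : i = i0
      · simp [hσ, h, hi1p]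
      · simp [hσ, h, hi0p]
    set e : ℝ := 1 / ((p : ℝ) - 1) with he
    have he0 : 0 ≤ e := by positivity
    set F : Fin n → (Fin n → ℝ) → ℝ≥0∞ := fun i z =>
      fA (r/2) v i (σ i) z + (fB (r/2) v i (σ i) z + fC (r/2) v i (σ i) z) with hF
    have mF : ∀ i, Measurable (F i) := fun i => (hmA _ _).add (hmH _ _)
    set G : Fin n → (Fin n → ℝ) → ℝ≥0∞ := fun i => (∫⋯∫⁻_Sᶜ, F i) with hG
    have mG : ∀ i, Measurable (G i) := fun i => Measurable.lmarginal _ (mF i)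
    have hpe : (p : ℝ) / ((p : ℝ) - 1) = e * S.card := by rw [hcard, he]; ring
    refine final_const hp hpn hr (outer_bound hpn hr hq0
      (K := (∑ i ∈ S, A i) ^ ((p : ℝ) / ((p : ℝ) - 1)))
      (Φ := fun x => ∏ i ∈ S, G i x ^ e) ?_ ?_ ?_) ?_
    · exact Finset.measurable_prod _ fun i _ => (mG i).pow_const e
    · intro x
      refine (lw_ineq S e he0 (by rw [hcard, he]; field_simp) G mG ?_ S subset_rfl x).trans ?_
      · intro i hi y t
        refine lm_inv (mF i) (by simp [hi]) (fun z s => ?_) y t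
        simp only [hF, fA_inv (hσne i), fB_inv (hσne i), fC_inv (hσne i)]
      · rw [hpe, ENNReal.rpow_mul, ENNReal.rpow_natCast, ← Finset.prod_const]
        refine Finset.prod_le_prod' fun i hi => ?_
        gcongr
        rw [hG, lm_comb (mF i) hi]
        simp only [hF]
        rw [lm_add (hmA _ _), lm_add (hmB _ _), lm_swap hvm (hσne i), ← add_assoc,
          lm_split hvm (hσne i), hvi]
        have : (∫⋯∫⁻_(Finset.univ.erase (σ i)), fB (r/2) v (σ i) i) x ≤ A (σ i) := by
          change _ ≤ faceIntegral n p r (σ i) u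
          rw [← hvi, ← lm_split hvm (hσne i).symm x]
          exact le_add_self
        refine (add_le_add_right this _).trans ?_
        rw [← Finset.sum_pair (hσne i) (f := A)]
        refine Finset.sum_le_sum_of_subset ?_
        intro k hk
        simp only [Finset.mem_insert, Finset.mem_singleton] at hk
        rcases hk with rfl | rfl
        · exact hi
        · exact (hmemS _).2 (hσp i)
    · intro x hx
      rw [hpe, ENNReal.rpow_mul, ENNReal.rpow_natCast, ← Finset.prod_const]
      refine Finset.prod_le_prod' fun i hi => ?_
      gcongr
      refine (havg i (σ i) (hσne i) ((hmemS i).1 hi) (hσp i) x hx).trans ?_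
      simp only [hG, hF]
      rw [lm_add (hmA _ _)]
      gcongr
      refine mul_le_of_le_one_left' ?_
      rw [ENNReal.ofReal_le_one, div_le_one hr]
      have := Finset.single_le_sum (f := x) (fun k hk => hx.1 k ((hmemS k).1 hk)) hi
      have := hx.2.2
      linarith
    · have hq1 : 1 ≤ (p : ℝ) / ((p : ℝ) - 1) := by rw [le_div_iff₀ hp1]; linarith
      refine (ENNReal.rpow_sum_le_const_mul_sum_rpow S A hq1).trans ?_
      gcongr
      rw [hcard, ← ENNReal.ofReal_natCast, ENNReal.ofReal_rpow_of_pos (by linarith)]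
      apply ENNReal.ofReal_le_ofReal
      have e1 : (p : ℝ) / ((p : ℝ) - 1) - 1 = 1 / ((p : ℝ) - 1) := by field_simp; ring
      have hp3 : (3 : ℝ) ≤ p := by exact_mod_cast hp'
      rw [e1]
      have hle : (p : ℝ) ≤ ((p : ℝ) - 1) ^ ((p : ℝ) - 1) := by
        calc (p : ℝ) ≤ ((p : ℝ) - 1) ^ (2 : ℝ) := by rw [Real.rpow_two]; nlinarith
          _ ≤ _ := Real.rpow_le_rpow_of_exponent_le (by linarith) (by linarith)
      calc (p : ℝ) ^ (1 / ((p : ℝ) - 1))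
          ≤ (((p : ℝ) - 1) ^ ((p : ℝ) - 1)) ^ (1 / ((p : ℝ) - 1)) :=
            Real.rpow_le_rpow (by positivity) hle (by positivity)
        _ = (p : ℝ) - 1 := by
            rw [← Real.rpow_mul hp1.le, mul_one_div_cancel hp1.ne', Real.rpow_one]
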